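/- The pseudo-unitary group U_{p,q} = {g an n×n complex matrix : g† s g = s} is contained in the closure of the semigroup H_{p,q} = {h an n×n complex matrix : s − h†sh is positive definite} within the space of n×n complex matrices. -/

import Mathlib

open Matrix
open scoped ComplexOrder

/-- The signature matrix `s = diag(1,…,1,−1,…,−1)` with `p` entries `+1` and `q`
entries `−1`. -/
noncomputable def sMat (p q : ℕ) : Matrix (Fin (p + q)) (Fin (p + q)) ℂ :=
  Matrix.diagonal (fun i => if (i : ℕ) < p then 1 else -1)

/-!
If `s` is Hermitian, then `u = 1 - 2ts` satisfies `s - u†su = 4t s(1 - ts)s` for real `t`, and this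
is positive definite when `s` is invertible and `t > 0` is small. If `s - g†s'g ≥ 0`, then in
`s - (gu)†s'(gu) = (s - u†su) + u†(s - g†s'g)u` the first summand is positive definite and the
second positive semidefinite, while `gu → g` as `t → 0`. Pseudo-unitary `g` is the case `s' = s`,
`s - g†sg = 0`.
-/

open Filter Topology

section PosDef

variable {𝕜 n : Type*} [RCLike 𝕜] [DecidableEq n] {A s : Matrix n n 𝕜}

theorem posDef_one_sub_smul_iff [Fintype n] (hA : A.IsHermitian) (t : ℝ) :
    (1 - t • A).PosDef ↔ ∀ i, t * hA.eigenvalues i < 1 := by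
  let D : Matrix n n 𝕜 := diagonal (fun i ↦ ((1 - t * hA.eigenvalues i : ℝ) : 𝕜))
  have D_eq : D = 1 - (t : 𝕜) • diagonal (RCLike.ofReal ∘ hA.eigenvalues) := by
    rw [← diagonal_one, ← diagonal_smul, diagonal_sub]
    congr! 2
    simp
  have diagonalization : 1 - t • A = Unitary.conjStarAlgAut 𝕜 _ hA.eigenvectorUnitary D := by
    rw [D_eq, map_sub, map_one, map_smul, ← hA.spectral_theorem,
      RCLike.real_smul_eq_coe_smul (K := 𝕜)]
  rw [diagonalization, Unitary.conjStarAlgAut_apply,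
    Unitary.isUnit_coe.posDef_star_right_conjugate_iff, posDef_diagonal_iff]
  simp only [RCLike.ofReal_pos, sub_pos]

theorem eventually_posDef_one_sub_smul [Finite n] (hA : A.IsHermitian) :
    ∀ᶠ t : ℝ in 𝓝 0, (1 - t • A).PosDef := by
  cases nonempty_fintype n
  simp only [posDef_one_sub_smul_iff hA, eventually_all]
  intro i
  have tendsto_zero : Tendsto (fun t : ℝ ↦ t * hA.eigenvalues i) (𝓝 0) (𝓝 0) :=
    Continuous.tendsto' (by fun_prop) 0 0 (zero_mul _)
  exact tendsto_zero.eventually_lt_const one_pos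

theorem sub_one_sub_smul_mul_mul_one_sub_smul {R S : Type*} [CommRing R] [Ring S] [Algebra R S]
    (t : R) (a : S) :
    a - (1 - (2 * t) • a) * a * (1 - (2 * t) • a) = (4 * t) • (a * (1 - t • a) * a) := by
  simp only [mul_sub, sub_mul, mul_one, one_mul, smul_mul_assoc, mul_smul_comm]
  module

theorem eventually_posDef_sub_conjTranspose_mul_mul_one_sub_smul [Fintype n]
    (hs : s.IsHermitian) (hs_unit : IsUnit s) :
    ∀ᶠ t : ℝ in 𝓝[>] 0, (s - (1 - (2 * t) • s)ᴴ * s * (1 - (2 * t) • s)).PosDef := by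
  filter_upwards [self_mem_nhdsWithin, (eventually_posDef_one_sub_smul hs).filter_mono
    nhdsWithin_le_nhds] with t (ht : 0 < t) posDef_one_sub
  have posDef_conj : (s * (1 - t • s) * s).PosDef := by
    simpa only [hs.eq] using
      posDef_one_sub.conjTranspose_mul_mul_same (mulVec_injective_of_isUnit hs_unit)
  have conjTranspose_eq : (1 - (2 * t) • s)ᴴ = 1 - (2 * t) • s := by
    rw [conjTranspose_sub, conjTranspose_one, conjTranspose_smul, star_trivial, hs.eq]
  rw [conjTranspose_eq, sub_one_sub_smul_mul_mul_one_sub_smul]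
  exact posDef_conj.smul (by positivity : 0 < 4 * t)

end PosDef

theorem posDef_sub_conjTranspose_mul_mul_mul {R k m n : Type*} [Ring R] [PartialOrder R]
    [StarRing R] [AddLeftMono R] [Fintype k] [Fintype m] [Finite n]
    {a : Matrix k k R} {b : Matrix m m R} {c : Matrix n n R} {g : Matrix m k R} {h : Matrix k n R}
    (hg : (a - gᴴ * b * g).PosSemidef) (hh : (c - hᴴ * a * h).PosDef) :
    (c - (g * h)ᴴ * b * (g * h)).PosDef := by
  have decomposition : c - (g * h)ᴴ * b * (g * h) =
      (c - hᴴ * a * h) + hᴴ * (a - gᴴ * b * g) * h := by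
    simp only [conjTranspose_mul, Matrix.mul_sub, Matrix.sub_mul, Matrix.mul_assoc]
    abel
  rw [decomposition]
  exact hh.add_posSemidef (hg.conjTranspose_mul_mul_same h)

theorem pseudoUnitary_subset_closure_Hpq_general {𝕜 m n : Type*} [RCLike 𝕜] [Fintype m]
    [Fintype n] [DecidableEq n] {s : Matrix n n 𝕜} (hs : s.IsHermitian) (hs_unit : IsUnit s)
    (s' : Matrix m m 𝕜) :
    {g : Matrix m n 𝕜 | (s - gᴴ * s' * g).PosSemidef} ⊆
      closure {h : Matrix m n 𝕜 | (s - hᴴ * s' * h).PosDef} := by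
  intro g hg
  have tendsto_g : Tendsto (fun t : ℝ ↦ g * (1 - (2 * t) • s)) (𝓝[>] 0) (𝓝 g) :=
    (Continuous.tendsto' (by fun_prop) 0 g (by simp)).mono_left nhdsWithin_le_nhds
  exact mem_closure_of_tendsto tendsto_g
    ((eventually_posDef_sub_conjTranspose_mul_mul_one_sub_smul hs hs_unit).mono
      fun _ ↦ posDef_sub_conjTranspose_mul_mul_mul hg)

theorem isHermitian_sMat (p q : ℕ) : (sMat p q).IsHermitian := by
  refine isHermitian_diagonal_of_self_adjoint _ ?_
  ext i
  by_cases hi : (i : ℕ) < p <;> simp [hi]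

theorem isUnit_sMat (p q : ℕ) : IsUnit (sMat p q) := by
  rw [sMat, isUnit_diagonal, Pi.isUnit_iff]
  intro i
  split_ifs <;> simp

/-- The pseudo-unitary group `U_{p,q} = {g : g†sg = s}` is contained in the closure
of the semigroup `H_{p,q} = {h : s − h†sh > 0}`. -/
theorem pseudoUnitary_subset_closure_Hpq (p q : ℕ) (hp : 1 ≤ p) (hq : 1 ≤ q) :
    {g : Matrix (Fin (p + q)) (Fin (p + q)) ℂ | gᴴ * sMat p q * g = sMat p q} ⊆
      closure {h : Matrix (Fin (p + q)) (Fin (p + q)) ℂ |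
        (sMat p q - hᴴ * sMat p q * h).PosDef} := by
  intro g (hg : gᴴ * sMat p q * g = sMat p q)
  exact pseudoUnitary_subset_closure_Hpq_general (isHermitian_sMat p q) (isUnit_sMat p q) (sMat p q)
    (by simpa only [Set.mem_ofPred_eq, hg, sub_self] using PosSemidef.zero)
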